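/- Let ψ : ℝ → ℝ be the Legendre–Fenchel conjugate of the exponential Young function φ(x) = cosh(x) − 1, i.e. ψ(u) = sup_{x ∈ ℝ} (u·x − cosh(x) + 1), which is finite for every u. Then ψ satisfies the Δ₂ condition: there exists a constant K > 0 such that ψ(2u) ≤ K·ψ(u) for all u ∈ ℝ. -/

import Mathlib

/-- The Legendre–Fenchel conjugate `ψ(u) = sup_x (u·x − (cosh x − 1))` of the
exponential Young function `φ(x) = cosh x − 1`; it is finite for every real `u`. -/
noncomputable def coshConj (u : ℝ) : ℝ :=
  ⨆ x : ℝ, (u * x - (Real.cosh x - 1))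

/-!
If `φ` grows at least quadratically under dilation, `c² φ(x / c) ≤ φ(x)`, then substituting
`x = c y` in the supremum defining the conjugate gives `ψ(c u) ≤ c² ψ(u)`. For `φ = cosh - 1` the
growth comes from `cosh x - 1 = 2 sinh² (x / 2)` and the convexity of `sinh` on `[0, ∞)`.
-/

open Set

/-- The Legendre–Fenchel conjugate `f*(p) = sup_x (p x - f x)` of a real-valued function on a real
vector space, as a function on the algebraic dual. It is real-valued, so it takes the junk value `0`
where the supremum is infinite. -/
noncomputable def legendreConj {E : Type*} [AddCommMonoid E] [Module ℝ E]
    (f : E → ℝ) (p : Module.Dual ℝ E) : ℝ :=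
  ⨆ x, (p x - f x)

theorem legendreConj_smul_le {E : Type*} [AddCommMonoid E] [Module ℝ E]
    {f : E → ℝ} {p : Module.Dual ℝ E} {K r : ℝ} (hK : 0 ≤ K)
    (hp : BddAbove (range fun x => p x - f x)) (hf : ∀ x, K * f (r • x) ≤ f x) :
    legendreConj f ((K * r) • p) ≤ K * legendreConj f p := by
  refine ciSup_le fun x => ?_
  calc ((K * r) • p) x - f x
      ≤ ((K * r) • p) x - K * f (r • x) := sub_le_sub_left (hf x) _
    _ = K * (p (r • x) - f (r • x)) := by
        simp only [LinearMap.smul_apply, map_smul, smul_eq_mul]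
        ring
    _ ≤ K * legendreConj f p := mul_le_mul_of_nonneg_left (le_ciSup hp (r • x)) hK

theorem bddAbove_range_sub_of_mul_sq_norm_le {E : Type*} [SeminormedAddCommGroup E]
    [NormedSpace ℝ E] {f : E → ℝ} {a : ℝ} (ha : 0 < a) (hf : ∀ x, a * ‖x‖ ^ 2 ≤ f x)
    (p : StrongDual ℝ E) : BddAbove (range fun x => p x - f x) := by
  refine ⟨‖p‖ ^ 2 / (4 * a), forall_mem_range.2 fun x => ?_⟩
  have young : ‖p‖ * ‖x‖ ≤ ‖p‖ ^ 2 / (4 * a) + a * ‖x‖ ^ 2 := by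
    have h : ‖p‖ ^ 2 / (4 * a) + a * ‖x‖ ^ 2 - ‖p‖ * ‖x‖ = (‖p‖ - 2 * a * ‖x‖) ^ 2 / (4 * a) := by
      field_simp
      ring
    rw [← sub_nonneg, h]
    positivity
  have hpx : p x ≤ ‖p‖ * ‖x‖ := (le_abs_self _).trans (p.le_opNorm x)
  linarith [hf x]

theorem convexOn_sinh : ConvexOn ℝ (Ici 0) Real.sinh := by
  refine MonotoneOn.convexOn_of_deriv (convex_Ici 0) Real.continuous_sinh.continuousOn
    Real.differentiable_sinh.differentiableOn ?_
  rw [Real.deriv_sinh]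
  exact Real.cosh_strictMonoOn.monotoneOn.mono interior_subset

theorem sinh_mul_le_mul_sinh {r x : ℝ} (hr₀ : 0 ≤ r) (hr₁ : r ≤ 1) (hx : 0 ≤ x) :
    Real.sinh (r * x) ≤ r * Real.sinh x := by
  simpa using convexOn_sinh.2 hx self_mem_Ici hr₀ (sub_nonneg.2 hr₁) (add_sub_cancel r 1)

theorem abs_sinh_mul_le {r : ℝ} (hr : |r| ≤ 1) (x : ℝ) :
    |Real.sinh (r * x)| ≤ |r * Real.sinh x| := by
  rw [Real.abs_sinh, abs_mul, abs_mul, Real.abs_sinh]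
  exact sinh_mul_le_mul_sinh (abs_nonneg r) hr (abs_nonneg x)

theorem cosh_sub_one_eq_two_mul_sinh_half_sq (x : ℝ) :
    Real.cosh x - 1 = 2 * Real.sinh (x / 2) ^ 2 := by
  have h := Real.cosh_two_mul (x / 2)
  rw [mul_div_cancel₀ x two_ne_zero, Real.cosh_sq] at h
  linarith

theorem half_mul_sq_le_cosh_sub_one (x : ℝ) : 1 / 2 * x ^ 2 ≤ Real.cosh x - 1 := by
  have h : (x / 2) ^ 2 ≤ Real.sinh (x / 2) ^ 2 := by
    rw [sq_le_sq, Real.abs_sinh]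
    exact Real.self_le_sinh_iff.2 (abs_nonneg _)
  rw [cosh_sub_one_eq_two_mul_sinh_half_sq]
  linarith

theorem cosh_mul_sub_one_le {r : ℝ} (hr : |r| ≤ 1) (x : ℝ) :
    Real.cosh (r * x) - 1 ≤ r ^ 2 * (Real.cosh x - 1) := by
  have h : Real.sinh (r * (x / 2)) ^ 2 ≤ (r * Real.sinh (x / 2)) ^ 2 :=
    sq_le_sq.2 (abs_sinh_mul_le hr _)
  rw [cosh_sub_one_eq_two_mul_sinh_half_sq, cosh_sub_one_eq_two_mul_sinh_half_sq, mul_div_assoc]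
  linarith

theorem coshConj_eq_legendreConj (u : ℝ) :
    coshConj u = legendreConj (fun x => Real.cosh x - 1) (LinearMap.mul ℝ ℝ u) :=
  rfl

theorem bddAbove_range_mul_sub_cosh_sub_one (u : ℝ) :
    BddAbove (range fun x : ℝ => u * x - (Real.cosh x - 1)) :=
  bddAbove_range_sub_of_mul_sq_norm_le one_half_pos
    (fun x => by simpa only [Real.norm_eq_abs, sq_abs] using half_mul_sq_le_cosh_sub_one x)
    (ContinuousLinearMap.mul ℝ ℝ u)

theorem coshConj_mul_le {c : ℝ} (hc : 1 ≤ |c|) (u : ℝ) :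
    coshConj (c * u) ≤ c ^ 2 * coshConj u := by
  have hc₀ : c ≠ 0 := abs_pos.1 (one_pos.trans_le hc)
  have cosh_dilation (x : ℝ) : c ^ 2 * (Real.cosh (c⁻¹ • x) - 1) ≤ Real.cosh x - 1 := by
    have hc_inv : |c⁻¹| ≤ 1 := by
      rw [abs_inv]
      exact inv_le_one_of_one_le₀ hc
    calc c ^ 2 * (Real.cosh (c⁻¹ • x) - 1)
        ≤ c ^ 2 * (c⁻¹ ^ 2 * (Real.cosh x - 1)) :=
          mul_le_mul_of_nonneg_left (cosh_mul_sub_one_le hc_inv x) (sq_nonneg c)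
      _ = Real.cosh x - 1 := by field_simp
  have mul_eq_smul : LinearMap.mul ℝ ℝ (c * u) = (c ^ 2 * c⁻¹) • LinearMap.mul ℝ ℝ u := by
    rw [pow_two, mul_inv_cancel_right₀ hc₀, ← map_smul, smul_eq_mul]
  rw [coshConj_eq_legendreConj, coshConj_eq_legendreConj, mul_eq_smul]
  exact legendreConj_smul_le (sq_nonneg c) (bddAbove_range_mul_sub_cosh_sub_one u) cosh_dilation

/-- The conjugate `ψ` of the exponential Young function `φ(x) = cosh x − 1`
satisfies the `Δ₂` condition: `ψ(2u) ≤ K·ψ(u)` for some `K > 0` and all `u`. -/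
theorem coshConj_delta_two :
    ∃ K > (0 : ℝ), ∀ u : ℝ, coshConj (2 * u) ≤ K * coshConj u :=
  ⟨2 ^ 2, by positivity, coshConj_mul_le (by norm_num)⟩
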